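/- Let n be a nonnegative bounded solution of the Kompaneets equation with initial data n₀ satisfying x² n₀(x) → 0 as x → ∞. Then for any 0 ≤ s ≤ t, lim_{x→0⁺} ∫ₛᵗ J(x, n(·,τ)) dτ = ∫ₛᵗ n(0,τ)² dτ. If moreover 0 < s ≤ t, then the stronger convergences hold: lim_{x→0⁺} ∫ₛᵗ x² |∂ₓ n(x,τ)| dτ = 0 and lim_{x→0⁺} ∫ₛᵗ |J(x, n(·,τ)) − n(0,τ)²| dτ = 0. -/

import Mathlib

/-!
The transport part of the flux converges by dominated convergence, so everything reduces to
`∫ x² |∂ₓ n(x,τ)| dτ → 0` as `x → 0⁺`, on time intervals that may start at `0`. The argument is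
local in `(0,a) × (0,T)` and uses only `|n| ≤ M` and the equation.

Near a point `(x₀, t₀)` put `x = x₀ exp (ρ Y)`, `t = t₀ + ρ² S` with `ρ ≤ x₀`. The equation becomes
`u_S = u_YY + β u_Y + f` with `β` bounded and `f = O(ρ²)`, uniformly in `x₀ → 0`, and `u_Y` equals
`ρ x₀ ∂ₓ n` at the base point. An interior gradient estimate at unit scale therefore controls
`x² ∂ₓ n`. Since the derivatives are only known to exist pointwise, that estimate is obtained by
doubling the space variable in the maximum principle instead of differentiating the equation.

It has two consequences. The bound `|n| ≤ M` alone gives `x² |∂ₓ n| ≤ C (1 + x / √t)`, so the times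
in `(0, x²)` contribute `O(x²)`. Combined with a barrier that propagates smallness from the time
slice `t - x²`, it gives `x² |∂ₓ n(x,t)| ≤ C (osc + x)`, where `osc` is the oscillation of
`n(·, t - x²)` on `(0, 2x]`. Since `n(·,τ)` has a limit at `0`, this oscillation tends to `0`
pointwise and boundedly in `τ`, and so does its time integral; the shift by `x²` is absorbed by a
change of variables.
-/

open MeasureTheory Filter Set Real Topology

/-- The Kompaneets photon flux `J(x,u) = x² u'(x) + (x² - 2x) u(x) + u(x)²`. -/
noncomputable def kompFlux (u : ℝ → ℝ) (x : ℝ) : ℝ :=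
  x ^ 2 * deriv u x + (x ^ 2 - 2 * x) * u x + u x ^ 2

/-- A (global-in-time) nonnegative solution of the Kompaneets equation
`∂ₜ n = ∂ₓ J(x, n(·,t))` on `(0,∞) × (0,∞)` with initial data `n₀`:
nonnegative, bounded, `C^{2,1}` in the interior, attaining the initial data,
continuous into `L¹`, and with `x² n → 0` and `x² ∂ₓ n → 0` as `x → ∞`,
uniformly on the indicated time sets.  No boundary condition at `x = 0`. -/
structure IsKompSol (n : ℝ → ℝ → ℝ) (n₀ : ℝ → ℝ) : Prop where
  nonneg : ∀ x t : ℝ, 0 < x → 0 < t → 0 ≤ n x t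
  bounded : ∃ M : ℝ, ∀ x t : ℝ, 0 < x → 0 < t → n x t ≤ M
  init : ∀ x : ℝ, 0 < x → n x 0 = n₀ x
  contOn : ContinuousOn (fun p : ℝ × ℝ => n p.1 p.2)
    ((Set.Ioi (0:ℝ)) ×ˢ (Set.Ioi (0:ℝ)))
  diff_x : ∀ t : ℝ, 0 < t → ∀ x : ℝ, 0 < x → DifferentiableAt ℝ (fun y => n y t) x
  diff_xx : ∀ t : ℝ, 0 < t → ∀ x : ℝ, 0 < x →
    DifferentiableAt ℝ (deriv (fun y => n y t)) x
  diff_t : ∀ x : ℝ, 0 < x → ∀ t : ℝ, 0 < t → DifferentiableAt ℝ (fun τ => n x τ) t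
  pde : ∀ x : ℝ, 0 < x → ∀ t : ℝ, 0 < t →
    deriv (fun τ => n x τ) t = deriv (fun y => kompFlux (fun z => n z t) y) x
  l1init : Filter.Tendsto (fun t => ∫ x in Set.Ioi (0:ℝ), |n x t - n₀ x|)
    (𝓝[>] (0:ℝ)) (nhds 0)
  decay : ∀ T : ℝ, 0 < T → ∀ ε : ℝ, 0 < ε → ∃ R : ℝ, 0 < R ∧
    ∀ x : ℝ, R ≤ x → ∀ t : ℝ, 0 ≤ t → t < T → x ^ 2 * n x t < ε
  decay' : ∀ T : ℝ, 0 < T → ∀ ε : ℝ, 0 < ε → ∃ R : ℝ, 0 < R ∧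
    ∀ x : ℝ, R ≤ x → ∀ t : ℝ, 1 / x ^ 2 ≤ t → t < T →
      |x ^ 2 * deriv (fun y => n y t) x| < ε

/-! ### Derivative tests at a maximum -/

lemma second_deriv_nonpos_of_isLocalMax {f f' : ℝ → ℝ} {f'' x : ℝ} (hmax : IsLocalMax f x)
    (hf : ∀ᶠ y in 𝓝 x, HasDerivAt f (f' y) y) (hf' : HasDerivAt f' f'' x) : f'' ≤ 0 := by
  by_contra! hpos
  have hderiv : deriv f =ᶠ[𝓝 x] f' := hf.mono fun y hy => hy.deriv
  have hsecond : deriv (deriv f) x = f'' := by rw [hderiv.deriv_eq, hf'.deriv]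
  have hmin : IsLocalMin f x := isLocalMin_of_deriv_deriv_pos (hsecond ▸ hpos)
    hmax.deriv_eq_zero hf.self_of_nhds.continuousAt
  -- A point that is both a local maximum and a local minimum makes `f` locally constant.
  have hconst : f =ᶠ[𝓝 x] fun _ => f x := by
    filter_upwards [hmax, hmin] with y h1 h2 using le_antisymm h1 h2
  have hzero : deriv f =ᶠ[𝓝 x] fun _ => 0 := by
    filter_upwards [hconst.eventuallyEq_nhds] with y hy
    simp [hy.deriv_eq]
  rw [hzero.deriv_eq, deriv_const] at hsecond
  exact hpos.ne hsecond

lemma deriv_nonneg_of_eventually_le_left {f : ℝ → ℝ} {f' x : ℝ}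
    (hf : HasDerivWithinAt f f' (Iio x) x) (hle : ∀ᶠ y in 𝓝[<] x, f y ≤ f x) : 0 ≤ f' := by
  refine ge_of_tendsto ((hasDerivWithinAt_iff_tendsto_slope' self_notMem_Iio).1 hf) ?_
  filter_upwards [hle, self_mem_nhdsWithin] with y hy hyx
  rw [slope_def_field]
  exact div_nonneg_of_nonpos (sub_nonpos.2 hy) (sub_nonpos.2 (le_of_lt hyx))

/-- Moving the two variables in opposite directions doubles the argument of `ψ`, whence the
factor `4`. -/
lemma doubled_isLocalMax_test {f f' g g' ψ ψ' : ℝ → ℝ} {f'' g'' ψ'' X Y : ℝ}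
    (hmax : IsLocalMax (fun p : ℝ × ℝ => f p.1 - g p.2 - ψ (p.1 - p.2)) (X, Y))
    (hf : ∀ᶠ x in 𝓝 X, HasDerivAt f (f' x) x) (hf' : HasDerivAt f' f'' X)
    (hg : ∀ᶠ y in 𝓝 Y, HasDerivAt g (g' y) y) (hg' : HasDerivAt g' g'' Y)
    (hψ : ∀ᶠ s in 𝓝 (X - Y), HasDerivAt ψ (ψ' s) s) (hψ' : HasDerivAt ψ' ψ'' (X - Y)) :
    f' X = ψ' (X - Y) ∧ g' Y = ψ' (X - Y) ∧ f'' - g'' ≤ 4 * ψ'' := by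
  refine ⟨?_, ?_, ?_⟩
  · have hmaxX : IsLocalMax (fun x => f x - g Y - ψ (x - Y)) X :=
      hmax.comp_continuous (g := fun x => (x, Y)) (by fun_prop)
    have hd := (hf.self_of_nhds.sub_const (g Y)).sub (hψ.self_of_nhds.comp_sub_const X Y)
    linarith [hmaxX.hasDerivAt_eq_zero hd]
  · have hmaxY : IsLocalMax (fun y => f X - g y - ψ (X - y)) Y :=
      hmax.comp_continuous (g := fun y => (X, y)) (by fun_prop)
    have hd := (hg.self_of_nhds.const_sub (f X)).sub (hψ.self_of_nhds.comp_const_sub X Y)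
    linarith [hmaxY.hasDerivAt_eq_zero hd]
  · have hmaxZ : IsLocalMax (fun z => f (X + z) - g (Y - z) - ψ (X + z - (Y - z))) 0 := by
      have hmax0 : IsLocalMax (fun p : ℝ × ℝ => f p.1 - g p.2 - ψ (p.1 - p.2)) (X + 0, Y - 0) := by
        simpa using hmax
      exact hmax0.comp_continuous (g := fun z => (X + z, Y - z)) (by fun_prop)
    have hX : Tendsto (fun z : ℝ => X + z) (𝓝 0) (𝓝 X) := by
      simpa using (continuous_const_add X).tendsto 0
    have hY : Tendsto (fun z : ℝ => Y - z) (𝓝 0) (𝓝 Y) := by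
      simpa using (continuous_sub_left Y).tendsto 0
    have hXY (z : ℝ) : HasDerivAt (fun z => X + z - (Y - z)) 2 z :=
      (((hasDerivAt_id z).const_add X).sub ((hasDerivAt_id z).const_sub Y)).congr_deriv
        (by norm_num)
    have hfirst : ∀ᶠ z in 𝓝 0, HasDerivAt (fun z => f (X + z) - g (Y - z) - ψ (X + z - (Y - z)))
        (f' (X + z) + g' (Y - z) - ψ' (X + z - (Y - z)) * 2) z := by
      filter_upwards [hX.eventually hf, hY.eventually hg, (hX.sub hY).eventually hψ]
        with z hfz hgz hψz
      exact (((hfz.comp_const_add X z).sub (hgz.comp_const_sub Y z)).sub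
        (hψz.comp z (hXY z))).congr_deriv (by ring)
    have hsecond : HasDerivAt (fun z => f' (X + z) + g' (Y - z) - ψ' (X + z - (Y - z)) * 2)
        (f'' - g'' - ψ'' * 2 * 2) 0 :=
      (((HasDerivAt.comp_const_add X 0 (by simpa using hf')).add
        (HasDerivAt.comp_const_sub Y 0 (by simpa using hg'))).sub
        ((HasDerivAt.comp 0 (by simpa using hψ') (hXY 0)).mul_const 2)).congr_deriv (by ring)
    linarith [second_deriv_nonpos_of_isLocalMax hmaxZ hfirst hsecond]

/-- The penalization keeps a positive value of the doubled function off the parabolic boundary. -/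
lemma mem_Ioo_of_doubled_pos {v ψ : ℝ → ℝ} {δ κ X Y T : ℝ} (hκ : 0 < κ) (hosc : v X - v Y ≤ κ)
    (hT : T ≤ 0) (hXY : X - Y ∈ Icc 0 δ) (hψ : 0 ≤ ψ (X - Y)) (hψδ : κ ≤ ψ δ)
    (hpos : 0 < v X - v Y - ψ (X - Y) - κ * (X ^ 2 + Y ^ 2 - T)) :
    X ∈ Ioo (-1 : ℝ) 1 ∧ Y ∈ Ioo (-1 : ℝ) 1 ∧ -1 < T ∧ X - Y ∈ Ioo 0 δ := by
  have hX2 := sq_nonneg X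
  have hY2 := sq_nonneg Y
  have hpen_nonneg : 0 ≤ κ * (X ^ 2 + Y ^ 2 - T) := mul_nonneg hκ.le (by linarith)
  have hpen : X ^ 2 + Y ^ 2 - T < 1 := lt_of_mul_lt_mul_left (by linarith) hκ.le
  refine ⟨abs_lt.1 ((sq_lt_one_iff_abs_lt_one X).1 (by linarith)),
    abs_lt.1 ((sq_lt_one_iff_abs_lt_one Y).1 (by linarith)), by linarith,
    hXY.1.lt_of_ne fun h0 => ?_, hXY.2.lt_of_ne fun hδ => ?_⟩
  · rw [sub_eq_zero.1 h0.symm] at hpos hψ hpen_nonneg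
    linarith
  · rw [hδ] at hpos
    linarith

/-! ### Pointwise parabolic inequalities on a box -/

/-- `u(X,T)` is continuous on the closed box `[-R,R] × [-1,0]` and, off its parabolic boundary, has
the separate partial derivatives `ux`, `uxx`, `ut`, with `|ut - uxx| ≤ B |ux| + F`. The derivatives
are not assumed continuous. -/
structure IsParabolic (u ux uxx ut : ℝ → ℝ → ℝ) (R B F : ℝ) : Prop where
  continuousOn : ContinuousOn (fun p : ℝ × ℝ => u p.1 p.2) (Icc (-R) R ×ˢ Icc (-1) 0)
  hasDerivAt_x : ∀ X ∈ Ioo (-R) R, ∀ T ∈ Ioc (-1 : ℝ) 0, HasDerivAt (fun y => u y T) (ux X T) X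
  hasDerivAt_xx : ∀ X ∈ Ioo (-R) R, ∀ T ∈ Ioc (-1 : ℝ) 0,
    HasDerivAt (fun y => ux y T) (uxx X T) X
  hasDerivAt_t : ∀ X ∈ Ioo (-R) R, ∀ T ∈ Ioc (-1 : ℝ) 0, HasDerivAt (fun τ => u X τ) (ut X T) T
  abs_sub_le : ∀ X ∈ Ioo (-R) R, ∀ T ∈ Ioc (-1 : ℝ) 0, |ut X T - uxx X T| ≤ B * |ux X T| + F

namespace IsParabolic

variable {u ux uxx ut : ℝ → ℝ → ℝ} {R B F M ε κ : ℝ}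

lemma neg (h : IsParabolic u ux uxx ut R B F) :
    IsParabolic (fun X T => -u X T) (fun X T => -ux X T) (fun X T => -uxx X T)
      (fun X T => -ut X T) R B F where
  continuousOn := h.continuousOn.neg
  hasDerivAt_x X hX T hT := (h.hasDerivAt_x X hX T hT).neg
  hasDerivAt_xx X hX T hT := (h.hasDerivAt_xx X hX T hT).neg
  hasDerivAt_t X hX T hT := (h.hasDerivAt_t X hX T hT).neg
  abs_sub_le X hX T hT := by
    rw [neg_sub_neg, abs_sub_comm, abs_neg]
    exact h.abs_sub_le X hX T hT

lemma le_of_strict_supersolution {φ φx φxx φt : ℝ → ℝ → ℝ} (h : IsParabolic u ux uxx ut R B F)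
    (hφ : Continuous fun p : ℝ × ℝ => φ p.1 p.2)
    (hφx : ∀ X T, HasDerivAt (fun y => φ y T) (φx X T) X)
    (hφxx : ∀ X T, HasDerivAt (fun y => φx y T) (φxx X T) X)
    (hφt : ∀ X T, HasDerivAt (fun τ => φ X τ) (φt X T) T)
    (hstrict : ∀ X ∈ Ioo (-R) R, ∀ T ∈ Ioc (-1 : ℝ) 0, B * |φx X T| + F < φt X T - φxx X T)
    (hlateral : ∀ X, |X| = R → ∀ T ∈ Icc (-1 : ℝ) 0, u X T ≤ φ X T)
    (hinitial : ∀ X ∈ Icc (-R) R, u X (-1) ≤ φ X (-1)) {x t : ℝ} (hx : x ∈ Icc (-R) R)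
    (ht : t ∈ Icc (-1 : ℝ) 0) : u x t ≤ φ x t := by
  obtain ⟨⟨X, T⟩, ⟨hX, hT⟩, hmax⟩ := (isCompact_Icc.prod isCompact_Icc).exists_isMaxOn
    ⟨(x, t), hx, ht⟩ (h.continuousOn.sub hφ.continuousOn)
  have hle : ∀ x' ∈ Icc (-R) R, ∀ t' ∈ Icc (-1 : ℝ) 0, u x' t' - φ x' t' ≤ u X T - φ X T :=
    fun x' hx' t' ht' => hmax (mk_mem_prod hx' ht')
  suffices u X T ≤ φ X T by linarith [hle x hx t ht]
  by_contra! hpos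
  have hT_gt : -1 < T := hT.1.lt_of_ne fun hT' => by
    subst hT'
    exact hpos.not_ge (hinitial X hX)
  have hX_lt : |X| < R := (abs_le.2 hX).lt_of_ne fun hX' => hpos.not_ge (hlateral X hX' T hT)
  have hXo : X ∈ Ioo (-R) R := abs_lt.1 hX_lt
  have hTo : T ∈ Ioc (-1 : ℝ) 0 := ⟨hT_gt, hT.2⟩
  have hnear : ∀ᶠ y in 𝓝 X, y ∈ Ioo (-R) R := Ioo_mem_nhds hXo.1 hXo.2
  have hloc : IsLocalMax (fun y => u y T - φ y T) X :=
    hnear.mono fun y hy => hle y (Ioo_subset_Icc_self hy) T hT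
  have hfirst : ux X T - φx X T = 0 :=
    hloc.hasDerivAt_eq_zero ((h.hasDerivAt_x X hXo T hTo).sub (hφx X T))
  have hsecond : uxx X T - φxx X T ≤ 0 :=
    second_deriv_nonpos_of_isLocalMax hloc
      (hnear.mono fun y hy => (h.hasDerivAt_x y hy T hTo).sub (hφx y T))
      ((h.hasDerivAt_xx X hXo T hTo).sub (hφxx X T))
  have htime : 0 ≤ ut X T - φt X T := by
    refine deriv_nonneg_of_eventually_le_left
      ((h.hasDerivAt_t X hXo T hTo).sub (hφt X T)).hasDerivWithinAt ?_
    filter_upwards [Ioo_mem_nhdsLT hT_gt] with τ hτ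
    exact hle X hX τ ⟨hτ.1.le, hτ.2.le.trans hT.2⟩
  have hpde := (abs_le.1 (h.abs_sub_le X hXo T hTo)).2
  rw [sub_eq_zero.1 hfirst] at hpde
  linarith [hstrict X hXo T hTo]

/-- The barrier `ε + M X² / R² + k (T + 1)` absorbs the unknown lateral boundary values at a cost of
order `M / R` on the unit box. -/
lemma le_of_initial_le (h : IsParabolic u ux uxx ut R B F) (hR : 1 ≤ R) (hB : 0 ≤ B) (hF : 0 ≤ F)
    (hM : 0 < M) (hε : 0 ≤ ε)
    (hu : ∀ X ∈ Icc (-R) R, ∀ T ∈ Icc (-1 : ℝ) 0, u X T ≤ M)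
    (hinitial : ∀ X ∈ Icc (-R) R, u X (-1) ≤ ε) {X T : ℝ} (hX : X ∈ Icc (-1 : ℝ) 1)
    (hT : T ∈ Icc (-1 : ℝ) 0) : u X T ≤ ε + F + (4 + 2 * B) * (M / R) := by
  have : 0 < R := one_pos.trans_le hR
  have hm : 0 < M / R := by positivity
  have hm' : M / R ^ 2 ≤ M / R := by
    rw [sq, ← div_div]
    exact div_le_self hm.le hR
  let k : ℝ := F + (3 + 2 * B) * (M / R)
  have hk : 0 ≤ k := by positivity
  have hbarrier : u X T ≤ ε + M / R ^ 2 * X ^ 2 + k * (T + 1) := by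
    refine h.le_of_strict_supersolution (φ := fun X T => ε + M / R ^ 2 * X ^ 2 + k * (T + 1))
      (φx := fun X _ => M / R ^ 2 * (2 * X)) (φxx := fun _ _ => M / R ^ 2 * 2)
      (φt := fun _ _ => k) (by fun_prop) (fun X T => ?_)
      (fun X _ => by simpa using ((hasDerivAt_id X).const_mul 2).const_mul (M / R ^ 2))
      (fun X T => ?_) (fun X hX T _ => ?_) (fun X hX T hT => ?_) (fun X hX => ?_)
      (Icc_subset_Icc (neg_le_neg hR) hR hX) hT
    · simpa using (((hasDerivAt_pow 2 X).const_mul (M / R ^ 2)).const_add ε).add_const (k * (T + 1))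
    · simpa using (((hasDerivAt_id T).add_const 1).const_mul k).const_add (ε + M / R ^ 2 * X ^ 2)
    · have hslope : |M / R ^ 2 * (2 * X)| ≤ 2 * (M / R) := by
        rw [abs_mul, abs_mul, abs_two, abs_of_pos (by positivity)]
        calc M / R ^ 2 * (2 * |X|) ≤ M / R ^ 2 * (2 * R) := by gcongr; exact (abs_lt.2 hX).le
          _ = 2 * (M / R) := by field_simp
      have := mul_le_mul_of_nonneg_left hslope hB
      simp only [k]
      linarith
    · have hedge : M / R ^ 2 * X ^ 2 = M := by rw [← sq_abs X, hX]; field_simp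
      have := mul_nonneg hk (neg_le_iff_add_nonneg.1 hT.1)
      linarith [hu X (abs_le.1 hX.le) T hT]
    · have : 0 ≤ M / R ^ 2 * X ^ 2 := by positivity
      linarith [hinitial X hX]
  have hX1 : X ^ 2 ≤ 1 := (sq_le_one_iff_abs_le_one X).2 (abs_le.2 hX)
  have hX2 : M / R ^ 2 * X ^ 2 ≤ M / R :=
    (mul_le_of_le_one_right (by positivity) hX1).trans hm'
  have hT1 : k * (T + 1) ≤ k := mul_le_of_le_one_right hk (by linarith [hT.2])
  simp only [k] at hbarrier hT1
  linarith

lemma abs_le_of_initial_abs_le (h : IsParabolic u ux uxx ut R B F) (hR : 1 ≤ R) (hB : 0 ≤ B)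
    (hF : 0 ≤ F) (hM : 0 < M) (hε : 0 ≤ ε)
    (hu : ∀ X ∈ Icc (-R) R, ∀ T ∈ Icc (-1 : ℝ) 0, |u X T| ≤ M)
    (hinitial : ∀ X ∈ Icc (-R) R, |u X (-1)| ≤ ε) {X T : ℝ} (hX : X ∈ Icc (-1 : ℝ) 1)
    (hT : T ∈ Icc (-1 : ℝ) 0) : |u X T| ≤ ε + F + (4 + 2 * B) * (M / R) :=
  abs_le'.2
    ⟨h.le_of_initial_le hR hB hF hM hε (fun X hX T hT => (abs_le'.1 (hu X hX T hT)).1)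
      (fun X hX => (abs_le'.1 (hinitial X hX)).1) hX hT,
    h.neg.le_of_initial_le hR hB hF hM hε (fun X hX T hT => (abs_le'.1 (hu X hX T hT)).2)
      (fun X hX => (abs_le'.1 (hinitial X hX)).2) hX hT⟩

lemma nonneg_of_doubled_isLocalMax {ψ ψ' : ℝ → ℝ} {ψ'' X Y T : ℝ}
    (h : IsParabolic u ux uxx ut R B F) (hB : 0 ≤ B) (hκ : 0 ≤ κ) (hX : X ∈ Ioo (-R) R)
    (hY : Y ∈ Ioo (-R) R) (hT : T ∈ Ioc (-1 : ℝ) 0)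
    (hψ : ∀ᶠ s in 𝓝 (X - Y), HasDerivAt ψ (ψ' s) s) (hψ' : HasDerivAt ψ' ψ'' (X - Y))
    (hmax : IsLocalMax
      (fun p : ℝ × ℝ => u p.1 T - u p.2 T - ψ (p.1 - p.2) - κ * (p.1 ^ 2 + p.2 ^ 2)) (X, Y))
    (htime : ∀ᶠ τ in 𝓝[<] T, u X τ - u Y τ + κ * τ ≤ u X T - u Y T + κ * T) :
    0 ≤ 4 * ψ'' + 2 * B * |ψ' (X - Y)| + (5 + 4 * B * R) * κ + 2 * F := by
  have hsq (y : ℝ) : HasDerivAt (fun y => κ * y ^ 2) (2 * κ * y) y :=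
    ((hasDerivAt_pow 2 y).const_mul κ).congr_deriv (by push_cast; ring)
  have hlin (y : ℝ) : HasDerivAt (fun y => 2 * κ * y) (2 * κ) y := by
    simpa using (hasDerivAt_id y).const_mul (2 * κ)
  obtain ⟨hfirstX, hfirstY, hsecond⟩ :
      ux X T - 2 * κ * X = ψ' (X - Y) ∧ ux Y T + 2 * κ * Y = ψ' (X - Y) ∧
        uxx X T - 2 * κ - (uxx Y T + 2 * κ) ≤ 4 * ψ'' :=
    doubled_isLocalMax_test (f := fun x => u x T - κ * x ^ 2) (g := fun y => u y T + κ * y ^ 2)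
      (hmax.congr (.of_eq (funext fun p => by ring)))
      (by filter_upwards [Ioo_mem_nhds hX.1 hX.2] with x hx
          exact (h.hasDerivAt_x x hx T hT).sub (hsq x))
      ((h.hasDerivAt_xx X hX T hT).sub (hlin X))
      (by filter_upwards [Ioo_mem_nhds hY.1 hY.2] with y hy
          exact (h.hasDerivAt_x y hy T hT).add (hsq y))
      ((h.hasDerivAt_xx Y hY T hT).add (hlin Y)) hψ hψ'
  have htime' : 0 ≤ ut X T - ut Y T + κ * 1 :=
    deriv_nonneg_of_eventually_le_left (((h.hasDerivAt_t X hX T hT).sub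
      (h.hasDerivAt_t Y hY T hT)).add ((hasDerivAt_id T).const_mul κ)).hasDerivWithinAt htime
  have hslope {v z : ℝ} (hz : |z| ≤ R) (hv : v = ψ' (X - Y) + 2 * κ * z) :
      B * |v| ≤ B * (|ψ' (X - Y)| + 2 * κ * R) := by
    rw [hv]
    gcongr
    refine (abs_add_le _ _).trans ?_
    rw [abs_mul, abs_of_nonneg (by positivity : 0 ≤ 2 * κ)]
    gcongr
  have hslopeX := hslope (v := ux X T) (z := X) (abs_lt.2 hX).le (by linarith)
  have hslopeY := hslope (v := ux Y T) (z := -Y) (by rw [abs_neg]; exact (abs_lt.2 hY).le)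
    (by linarith)
  have hpdeX := (abs_le.1 (h.abs_sub_le X hX T hT)).2
  have hpdeY := (abs_le.1 (h.abs_sub_le Y hY T hT)).1
  linarith

lemma continuousOn_doubled (h : IsParabolic u ux uxx ut R B F) :
    ContinuousOn (fun p : ℝ × ℝ × ℝ => u p.1 p.2.2 - u p.2.1 p.2.2)
      (Icc (-R) R ×ˢ Icc (-R) R ×ˢ Icc (-1) 0) :=
  (h.continuousOn.comp (f := fun p : ℝ × ℝ × ℝ => (p.1, p.2.2)) (by fun_prop)
    fun _ hp => ⟨hp.1, hp.2.2⟩).sub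
  (h.continuousOn.comp (f := fun p : ℝ × ℝ × ℝ => (p.2.1, p.2.2)) (by fun_prop)
    fun _ hp => ⟨hp.2.1, hp.2.2⟩)

lemma exists_max_doubled {ψ : ℝ → ℝ} {δ : ℝ} (h : IsParabolic u ux uxx ut R B F) (hR : 0 ≤ R)
    (hδ : 0 ≤ δ) (hψ : Continuous ψ) (κ : ℝ) :
    ∃ X ∈ Icc (-R) R, ∃ Y ∈ Icc (-R) R, ∃ T ∈ Icc (-1 : ℝ) 0, X - Y ∈ Icc 0 δ ∧
      ∀ x ∈ Icc (-R) R, ∀ y ∈ Icc (-R) R, ∀ t ∈ Icc (-1 : ℝ) 0, x - y ∈ Icc 0 δ →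
        u x t - u y t - ψ (x - y) - κ * (x ^ 2 + y ^ 2 - t) ≤
          u X T - u Y T - ψ (X - Y) - κ * (X ^ 2 + Y ^ 2 - T) := by
  let S : Set (ℝ × ℝ × ℝ) := (Icc (-R) R ×ˢ Icc (-R) R ×ˢ Icc (-1) 0) ∩
    {p | p.1 - p.2.1 ∈ Icc 0 δ}
  have hS : IsCompact S := (isCompact_Icc.prod (isCompact_Icc.prod isCompact_Icc)).inter_right
    (isClosed_Icc.preimage (by fun_prop))
  have hcont : ContinuousOn (fun p : ℝ × ℝ × ℝ => u p.1 p.2.2 - u p.2.1 p.2.2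
      - ψ (p.1 - p.2.1) - κ * (p.1 ^ 2 + p.2.1 ^ 2 - p.2.2)) S :=
    ((h.continuousOn_doubled.mono inter_subset_left).sub (by fun_prop)).sub (by fun_prop)
  have h0 : (0 : ℝ × ℝ × ℝ) ∈ S := by simp [S, hδ, Prod.le_def, hR]
  obtain ⟨⟨X, Y, T⟩, ⟨⟨hX, hY, hT⟩, hXY⟩, hmax⟩ := hS.exists_isMaxOn ⟨0, h0⟩ hcont
  exact ⟨X, hX, Y, hY, T, hT, hXY, fun x hx y hy t ht hxy =>
    isMaxOn_iff.1 hmax (x, y, t) ⟨⟨hx, hy, ht⟩, hxy⟩⟩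

lemma sub_le_modulus {ψ ψ' ψ'' : ℝ → ℝ} {δ : ℝ} (h : IsParabolic u ux uxx ut 1 B F) (hB : 0 ≤ B)
    (hκ : 0 < κ) (hosc : ∀ X ∈ Icc (-1 : ℝ) 1, ∀ Y ∈ Icc (-1 : ℝ) 1, ∀ T ∈ Icc (-1 : ℝ) 0,
      u X T - u Y T ≤ κ)
    (hψ : ∀ s, HasDerivAt ψ (ψ' s) s) (hψ' : ∀ s, HasDerivAt ψ' (ψ'' s) s)
    (hψ_nonneg : ∀ s ∈ Icc 0 δ, 0 ≤ ψ s) (hψδ : κ ≤ ψ δ)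
    (hconcave : ∀ s ∈ Ioo 0 δ, 4 * ψ'' s + 2 * B * |ψ' s| + (5 + 4 * B) * κ + 2 * F < 0)
    {x y t : ℝ} (hx : x ∈ Icc (-1 : ℝ) 1) (hy : y ∈ Icc (-1 : ℝ) 1) (ht : t ∈ Icc (-1 : ℝ) 0)
    (hxy : x - y ∈ Icc 0 δ) : u x t - u y t ≤ ψ (x - y) + κ * (x ^ 2 + y ^ 2 - t) := by
  have hψ_cont : Continuous ψ := continuous_iff_continuousAt.2 fun s => (hψ s).continuousAt
  obtain ⟨X, hX, Y, hY, T, hT, hXY, hmax⟩ :=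
    h.exists_max_doubled zero_le_one (hxy.1.trans hxy.2) hψ_cont κ
  suffices u X T - u Y T - ψ (X - Y) - κ * (X ^ 2 + Y ^ 2 - T) ≤ 0 by
    linarith [hmax x hx y hy t ht hxy]
  by_contra! hpos
  obtain ⟨hXo, hYo, hT1, hXYo⟩ := mem_Ioo_of_doubled_pos (v := (u · T)) hκ (hosc X hX Y hY T hT)
    hT.2 hXY (hψ_nonneg _ hXY) hψδ hpos
  have hloc : IsLocalMax
      (fun p : ℝ × ℝ => u p.1 T - u p.2 T - ψ (p.1 - p.2) - κ * (p.1 ^ 2 + p.2 ^ 2)) (X, Y) := by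
    have hnear : ∀ᶠ p : ℝ × ℝ in 𝓝 (X, Y), p.1 - p.2 ∈ Ioo 0 δ :=
      (continuous_fst.sub continuous_snd).continuousAt.eventually (Ioo_mem_nhds hXYo.1 hXYo.2)
    filter_upwards [prod_mem_nhds (Ioo_mem_nhds hXo.1 hXo.2) (Ioo_mem_nhds hYo.1 hYo.2), hnear]
      with p hp hp'
    linarith [hmax p.1 (Ioo_subset_Icc_self hp.1) p.2 (Ioo_subset_Icc_self hp.2) T hT
      (Ioo_subset_Icc_self hp')]
  have htime : ∀ᶠ τ in 𝓝[<] T, u X τ - u Y τ + κ * τ ≤ u X T - u Y T + κ * T := by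
    filter_upwards [Ioo_mem_nhdsLT hT1] with τ hτ
    linarith [hmax X hX Y hY τ ⟨hτ.1.le, hτ.2.le.trans hT.2⟩ hXY]
  have := h.nonneg_of_doubled_isLocalMax hB hκ.le hXo hYo ⟨hT1, hT.2⟩ (.of_forall hψ) (hψ' _)
    hloc htime
  linarith [hconcave _ hXYo]

/-- The concavity of the modulus `L (s - (B + 1) s² / 2)` beats the drift. -/
lemma sub_le_quadratic_modulus {L : ℝ} (h : IsParabolic u ux uxx ut 1 B F) (hB : 0 ≤ B)
    (hF : 0 ≤ F) (hε : 0 < ε) (hu : ∀ X ∈ Icc (-1 : ℝ) 1, ∀ T ∈ Icc (-1 : ℝ) 0, |u X T| ≤ ε)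
    (hL : 4 * (B + 1) * ε + F ≤ L) {x y t : ℝ} (hx : x ∈ Icc (-1 : ℝ) 1) (hy : y ∈ Icc (-1 : ℝ) 1)
    (ht : t ∈ Icc (-1 : ℝ) 0) (hxy : x - y ∈ Icc 0 (1 / (B + 1))) :
    u x t - u y t ≤
      L * (x - y - (B + 1) / 2 * (x - y) ^ 2) + 2 * ε * (x ^ 2 + y ^ 2 - t) := by
  let c : ℝ := (B + 1) / 2
  let δ : ℝ := 1 / (B + 1)
  have hL0 : 0 ≤ L := le_trans (by positivity) hL
  have hc : 0 < c := by positivity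
  have hcδ : c * δ = 1 / 2 := by simp only [c, δ]; field_simp
  have hcs {s : ℝ} (hs : s ∈ Icc 0 δ) : c * s ≤ 1 / 2 := hcδ ▸ by gcongr; exact hs.2
  have hψ (s : ℝ) : HasDerivAt (fun s => L * (s - c * s ^ 2)) (L * (1 - c * (2 * s))) s := by
    simpa using ((hasDerivAt_id s).sub ((hasDerivAt_pow 2 s).const_mul c)).const_mul L
  have hψ' (s : ℝ) : HasDerivAt (fun s => L * (1 - c * (2 * s))) (-(2 * c * L)) s :=
    (((((hasDerivAt_id s).const_mul 2).const_mul c).const_sub 1).const_mul L).congr_deriv (by ring)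
  refine h.sub_le_modulus hB (by positivity) (fun X hX Y hY T hT => ?_) hψ hψ' (fun s hs => ?_) ?_
    (fun s hs => ?_) hx hy ht hxy
  · linarith [abs_le.1 (hu X hX T hT), abs_le.1 (hu Y hY T hT)]
  · exact mul_nonneg hL0 (by nlinarith [hcs hs, hs.1])
  · calc 2 * ε = 4 * (B + 1) * ε * (δ / 2) := by simp only [δ]; field_simp; norm_num
      _ ≤ L * (δ / 2) := by gcongr; linarith
      _ = L * (δ - c * δ * δ) := by rw [hcδ]; ring
      _ = L * (δ - c * δ ^ 2) := by ring
  · have hslope : |L * (1 - c * (2 * s))| ≤ L := by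
      have := hcs (Ioo_subset_Icc_self hs)
      have := mul_nonneg hc.le hs.1.le
      rw [abs_of_nonneg (mul_nonneg hL0 (by linarith))]
      exact mul_le_of_le_one_right hL0 (by linarith)
    calc 4 * -(2 * c * L) + 2 * B * |L * (1 - c * (2 * s))| + (5 + 4 * B) * (2 * ε) + 2 * F
        ≤ 4 * -(2 * c * L) + 2 * B * L + (5 + 4 * B) * (2 * ε) + 2 * F := by gcongr
      _ = -(2 * B + 4) * L + (10 + 8 * B) * ε + 2 * F := by simp only [c]; ring
      _ ≤ -(2 * B + 4) * (4 * (B + 1) * ε + F) + (10 + 8 * B) * ε + 2 * F := by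
          gcongr ?_ + _ + _
          exact mul_le_mul_of_nonpos_left hL (by linarith)
      _ = -(8 * (B ^ 2 * ε) + 16 * (B * ε) + 6 * ε + 2 * (B * F) + 2 * F) := by ring
      _ < 0 := neg_lt_zero.2 (by positivity)

lemma gradient_le (h : IsParabolic u ux uxx ut 1 B F) (hB : 0 ≤ B) (hF : 0 ≤ F) (hε : 0 < ε)
    (hu : ∀ X ∈ Icc (-1 : ℝ) 1, ∀ T ∈ Icc (-1 : ℝ) 0, |u X T| ≤ ε) :
    ux 0 0 ≤ 4 * (B + 1) * ε + F := by
  let L : ℝ := 4 * (B + 1) * ε + F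
  have hδ : 0 < 1 / (B + 1) := by positivity
  have hδ1 : 1 / (B + 1) ≤ 1 := div_le_one_of_le₀ (by linarith) (by positivity)
  have hmodulus : ∀ᶠ y in 𝓝[<] (0 : ℝ),
      u 0 0 - u y 0 ≤ L * (-y - (B + 1) / 2 * y ^ 2) + 2 * ε * y ^ 2 := by
    filter_upwards [Ioo_mem_nhdsLT (neg_lt_zero.2 hδ)] with y hy
    have := h.sub_le_quadratic_modulus hB hF hε hu le_rfl (x := 0) (y := y) (t := 0) (by simp)
      ⟨by linarith [hy.1], by linarith [hy.2]⟩ (by simp) ⟨by linarith [hy.2], by linarith [hy.1]⟩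
    simpa using this
  have hderiv : HasDerivAt
      (fun y => -u y 0 - (L * (-y - (B + 1) / 2 * y ^ 2) + 2 * ε * y ^ 2)) (-ux 0 0 + L) 0 := by
    refine ((h.hasDerivAt_x 0 (by simp) 0 (by simp)).neg.sub
      ((((hasDerivAt_id (0 : ℝ)).neg.sub ((hasDerivAt_pow 2 (0 : ℝ)).const_mul
        ((B + 1) / 2))).const_mul L).add
        ((hasDerivAt_pow 2 (0 : ℝ)).const_mul (2 * ε)))).congr_deriv ?_
    simp
  have := deriv_nonneg_of_eventually_le_left hderiv.hasDerivWithinAt (by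
    filter_upwards [hmodulus] with y hy
    simp only [neg_zero, ne_eq, OfNat.ofNat_ne_zero, not_false_eq_true, zero_pow, mul_zero,
      sub_zero, add_zero]
    linarith)
  linarith

lemma abs_gradient_le (h : IsParabolic u ux uxx ut 1 B F) (hB : 0 ≤ B) (hF : 0 ≤ F) (hε : 0 < ε)
    (hu : ∀ X ∈ Icc (-1 : ℝ) 1, ∀ T ∈ Icc (-1 : ℝ) 0, |u X T| ≤ ε) :
    |ux 0 0| ≤ 4 * (B + 1) * ε + F :=
  abs_le'.2 ⟨h.gradient_le hB hF hε hu,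
    h.neg.gradient_le hB hF hε (by simpa only [abs_neg] using hu)⟩

end IsParabolic

/-! ### Gradient estimates for the Kompaneets equation -/

/-- `n` is a classical solution of the Kompaneets equation on `(0,a) × (0,T)` with `|n| ≤ M`. This
is the local hypothesis behind the behavior at `x = 0`: no sign, initial or boundary condition. -/
structure IsBoundedKompSol (n : ℝ → ℝ → ℝ) (a T M : ℝ) : Prop where
  bound_nonneg : 0 ≤ M
  abs_le_bound : ∀ x ∈ Ioo 0 a, ∀ t ∈ Ioo 0 T, |n x t| ≤ M
  continuousOn : ContinuousOn (fun p : ℝ × ℝ => n p.1 p.2) (Ioo 0 a ×ˢ Ioo 0 T)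
  diff_x : ∀ x ∈ Ioo 0 a, ∀ t ∈ Ioo 0 T, DifferentiableAt ℝ (fun y => n y t) x
  diff_xx : ∀ x ∈ Ioo 0 a, ∀ t ∈ Ioo 0 T, DifferentiableAt ℝ (deriv fun y => n y t) x
  diff_t : ∀ x ∈ Ioo 0 a, ∀ t ∈ Ioo 0 T, DifferentiableAt ℝ (fun τ => n x τ) t
  pde : ∀ x ∈ Ioo 0 a, ∀ t ∈ Ioo 0 T,
    deriv (fun τ => n x τ) t = deriv (fun y => kompFlux (fun z => n z t) y) x

lemma IsKompSol.exists_isBoundedKompSol {n : ℝ → ℝ → ℝ} {n₀ : ℝ → ℝ} (h : IsKompSol n n₀) :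
    ∃ M, ∀ a T, IsBoundedKompSol n a T M := by
  obtain ⟨M, hM⟩ := h.bounded
  refine ⟨max M 0, fun a T => ?_⟩
  exact
    { bound_nonneg := le_max_right M 0
      abs_le_bound := fun x hx t ht => by
        rw [abs_of_nonneg (h.nonneg x t hx.1 ht.1)]
        exact (hM x t hx.1 ht.1).trans (le_max_left M 0)
      continuousOn := h.contOn.mono (prod_mono Ioo_subset_Ioi_self Ioo_subset_Ioi_self)
      diff_x := fun x hx t ht => h.diff_x t ht.1 x hx.1
      diff_xx := fun x hx t ht => h.diff_xx t ht.1 x hx.1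
      diff_t := fun x hx t ht => h.diff_t x hx.1 t ht.1
      pde := fun x hx t ht => h.pde x hx.1 t ht.1 }

lemma deriv_kompFlux {u : ℝ → ℝ} {x : ℝ} (hu : DifferentiableAt ℝ u x)
    (hu' : DifferentiableAt ℝ (deriv u) x) :
    deriv (kompFlux u) x =
      x ^ 2 * deriv (deriv u) x + (x ^ 2 + 2 * u x) * deriv u x + (2 * x - 2) * u x := by
  have hflux : HasDerivAt (kompFlux u) _ x :=
    (((hasDerivAt_pow 2 x).mul hu'.hasDerivAt).add (((hasDerivAt_pow 2 x).sub
      ((hasDerivAt_id x).const_mul 2)).mul hu.hasDerivAt)).add (hu.hasDerivAt.pow 2)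
  rw [hflux.deriv]
  simp only [Nat.cast_ofNat, Nat.add_one_sub_one, pow_one, mul_one, id_eq, Pi.sub_apply]
  ring

lemma exp_mem_Icc_half_two {r : ℝ} (hr : |r| ≤ 1 / 2) : exp r ∈ Icc (1 / 2) 2 := by
  obtain ⟨hlow, hupp⟩ := abs_le.1 hr
  refine ⟨by linarith [add_one_le_exp r], ?_⟩
  rw [← neg_neg r, exp_neg]
  exact inv_le_of_inv_le₀ two_pos (by linarith [add_one_le_exp (-r)])

/-- The part of the rescaled equation that is neither `u_T` nor `u_YY`, with `p`, `q` standing for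
`∂ₓ n`, `∂ₓ² n` and `m` for `n`; the drift `2 m ρ / x` is bounded because `ρ ≤ 2 x`. -/
lemma abs_rescaled_residual_le {x ρ m M p q : ℝ} (hx : 0 < x) (hx1 : x ≤ 1) (hρ : 0 ≤ ρ)
    (hρ1 : ρ ≤ 1) (hρx : ρ ≤ 2 * x) (hm : |m| ≤ M) :
    |ρ ^ 2 * (x ^ 2 * q + (x ^ 2 + 2 * m) * p + (2 * x - 2) * m) - ρ ^ 2 * (x * p + x ^ 2 * q)|
      ≤ (1 + 4 * M) * |ρ * x * p| + 2 * M * ρ ^ 2 := by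
  have hratio : |ρ / x| ≤ 2 := by
    rwa [abs_of_nonneg (by positivity), div_le_iff₀ hx]
  have hdrift : |ρ * (x - 1) + 2 * m * (ρ / x)| ≤ 1 + 4 * M := by
    have hx' : |x - 1| ≤ 1 := abs_le.2 ⟨by linarith, by linarith⟩
    calc |ρ * (x - 1) + 2 * m * (ρ / x)| ≤ ρ * |x - 1| + 2 * |m| * |ρ / x| := by
          refine (abs_add_le _ _).trans_eq ?_
          rw [abs_mul, abs_mul, abs_mul, abs_two, abs_of_nonneg hρ]
      _ ≤ 1 * 1 + 2 * M * 2 := by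
          have := (abs_nonneg m).trans hm
          gcongr
      _ = 1 + 4 * M := by ring
  have hsource : |ρ ^ 2 * (2 * x - 2) * m| ≤ 2 * M * ρ ^ 2 := by
    have hx' : |2 * x - 2| ≤ 2 := abs_le.2 ⟨by linarith, by linarith⟩
    calc |ρ ^ 2 * (2 * x - 2) * m| = ρ ^ 2 * |2 * x - 2| * |m| := by
          rw [abs_mul, abs_mul, abs_of_nonneg (sq_nonneg ρ)]
      _ ≤ ρ ^ 2 * 2 * M := by gcongr
      _ = 2 * M * ρ ^ 2 := by ring
  calc _ = |(ρ * (x - 1) + 2 * m * (ρ / x)) * (ρ * x * p) + ρ ^ 2 * (2 * x - 2) * m| := by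
        congr 1; field_simp; ring
    _ ≤ (1 + 4 * M) * |ρ * x * p| + 2 * M * ρ ^ 2 := by
        refine (abs_add_le _ _).trans (add_le_add ?_ hsource)
        rw [abs_mul]
        gcongr

namespace IsBoundedKompSol

variable {n : ℝ → ℝ → ℝ} {a T M x x₀ t t₀ ρ R ε c : ℝ}

lemma rescaled_mem_Ioo (hx : x₀ ∈ Ioo 0 (min a 1 / 2)) (hρ : 0 < ρ) (hρt : ρ ^ 2 < t₀)
    (ht : t₀ < T) (hR : ρ * R ≤ 1 / 2) {Y S : ℝ} (hY : |Y| ≤ R) (hS : S ∈ Icc (-1 : ℝ) 0) :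
    x₀ * exp (ρ * Y) ∈ Ioo 0 (min a 1) ∧ x₀ ≤ 2 * (x₀ * exp (ρ * Y)) ∧
      x₀ * exp (ρ * Y) ≤ 2 * x₀ ∧ t₀ + ρ ^ 2 * S ∈ Ioo 0 T := by
  have hρY : |ρ * Y| ≤ 1 / 2 := by
    rw [abs_mul, abs_of_pos hρ]
    exact (mul_le_mul_of_nonneg_left hY hρ.le).trans hR
  obtain ⟨hlow, hupp⟩ := exp_mem_Icc_half_two hρY
  have hx_low := mul_le_mul_of_nonneg_left hlow hx.1.le
  have hx_upp := mul_le_mul_of_nonneg_left hupp hx.1.le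
  have hρ2 : 0 < ρ ^ 2 := by positivity
  refine ⟨⟨mul_pos hx.1 (exp_pos _), ?_⟩, ?_, ?_, ?_, ?_⟩ <;> nlinarith [hx.2, hρ2, hS.1, hS.2]

/-- In the variables `x = x₀ exp (ρ Y)`, `t = t₀ + ρ² S` with `ρ ≤ x₀` the diffusion coefficient is
`1` and the drift and source are bounded uniformly in `x₀`, `t₀` and `ρ`. -/
lemma exists_isParabolic_rescaled (h : IsBoundedKompSol n a T M) (hx : x₀ ∈ Ioo 0 (min a 1 / 2))
    (hρ : 0 < ρ) (hρx : ρ ≤ x₀) (hρt : ρ ^ 2 < t₀) (ht : t₀ < T) (hR : ρ * R ≤ 1 / 2) (c : ℝ) :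
    ∃ ux uxx ut : ℝ → ℝ → ℝ,
      IsParabolic (fun Y S => n (x₀ * exp (ρ * Y)) (t₀ + ρ ^ 2 * S) - c) ux uxx ut R
        (1 + 4 * M) (2 * M * ρ ^ 2) ∧
      ux 0 0 = ρ * x₀ * deriv (fun y => n y t₀) x₀ := by
  let X : ℝ → ℝ := fun Y => x₀ * exp (ρ * Y)
  let τ : ℝ → ℝ := fun S => t₀ + ρ ^ 2 * S
  have hmem {Y S : ℝ} (hY : |Y| ≤ R) (hS : S ∈ Icc (-1 : ℝ) 0) :=
    rescaled_mem_Ioo hx hρ hρt ht hR hY hS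
  have hXa {Y S : ℝ} (hY : |Y| ≤ R) (hS : S ∈ Icc (-1 : ℝ) 0) : X Y ∈ Ioo 0 a :=
    Ioo_subset_Ioo_right (min_le_left a 1) (hmem hY hS).1
  have hX (Y : ℝ) : HasDerivAt X (ρ * X Y) Y :=
    ((((hasDerivAt_id Y).const_mul ρ).exp).const_mul x₀).congr_deriv (by simp [X]; ring)
  have hτ (S : ℝ) : HasDerivAt τ (ρ ^ 2) S :=
    (((hasDerivAt_id S).const_mul (ρ ^ 2)).const_add t₀).congr_deriv (mul_one _)
  refine ⟨fun Y S => ρ * X Y * deriv (fun y => n y (τ S)) (X Y),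
    fun Y S => ρ ^ 2 * (X Y * deriv (fun y => n y (τ S)) (X Y) +
      X Y ^ 2 * deriv (deriv fun y => n y (τ S)) (X Y)),
    fun Y S => ρ ^ 2 * deriv (fun t => n (X Y) t) (τ S), ⟨?_, ?_, ?_, ?_, ?_⟩, by simp [X, τ]⟩
  · refine ContinuousOn.sub ?_ continuousOn_const
    exact h.continuousOn.comp (f := fun p : ℝ × ℝ => (X p.1, τ p.2)) (by fun_prop)
      fun p hp => ⟨hXa (abs_le.2 hp.1) hp.2, (hmem (abs_le.2 hp.1) hp.2).2.2.2⟩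
  all_goals
    intro Y hY S hS'
    replace hY := (abs_lt.2 hY).le
    have hS := Ioc_subset_Icc_self hS'
    obtain ⟨hX1, hX_low, -, hτT⟩ := hmem hY hS
    have hXY := hXa hY hS
  · exact (((h.diff_x _ hXY _ hτT).hasDerivAt.comp Y (hX Y)).sub_const c).congr_deriv (by ring)
  · refine (((hX Y).const_mul ρ).mul
      ((h.diff_xx _ hXY _ hτT).hasDerivAt.comp Y (hX Y))).congr_deriv ?_
    simp only [Function.comp]
    ring
  · exact (((h.diff_t _ hXY _ hτT).hasDerivAt.comp S (hτ S)).sub_const c).congr_deriv (by ring)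
  · rw [h.pde _ hXY _ hτT, deriv_kompFlux (h.diff_x _ hXY _ hτT) (h.diff_xx _ hXY _ hτT)]
    exact abs_rescaled_residual_le hX1.1 (hX1.2.le.trans (min_le_right a 1)) hρ.le
      (by linarith [hx.2, min_le_right a 1]) (hρx.trans hX_low) (h.abs_le_bound _ hXY _ hτT)

lemma mul_abs_deriv_le (h : IsBoundedKompSol n a T M) (hx : x ∈ Ioo 0 (min a 1 / 2))
    (hρ : 0 < ρ) (hρx : ρ ≤ x) (hρt : ρ ^ 2 < t) (ht : t < T) (hε : 0 < ε)
    (hn : ∀ Y ∈ Icc (-1 : ℝ) 1, ∀ S ∈ Icc (-1 : ℝ) 0,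
      |n (x * exp (ρ * Y)) (t + ρ ^ 2 * S) - c| ≤ ε) :
    ρ * x * |deriv (fun y => n y t) x| ≤ 4 * (2 + 4 * M) * ε + 2 * M * ρ ^ 2 := by
  have hM := h.bound_nonneg
  obtain ⟨ux, uxx, ut, hu, hux⟩ := h.exists_isParabolic_rescaled hx hρ hρx hρt ht (R := 1)
    (by linarith [hx.2, min_le_right a 1]) c
  have := hu.abs_gradient_le (by positivity) (by positivity) hε hn
  rw [hux, abs_mul, abs_of_pos (mul_pos hρ hx.1)] at this
  linarith

lemma exists_mul_abs_deriv_le (h : IsBoundedKompSol n a T M) :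
    ∃ C : ℝ, 0 ≤ C ∧ ∀ x ∈ Ioo 0 (min a 1 / 2), ∀ t ∈ Ioo 0 T,
      x ^ 2 * |deriv (fun y => n y t) x| ≤ C * (1 + x * t ^ (-(1 / 2) : ℝ)) := by
  have hM := h.bound_nonneg
  let K : ℝ := 4 * (2 + 4 * M) * (M + 1) + 2 * M
  refine ⟨2 * K, by positivity, fun x hx t ht => ?_⟩
  have hx0 : 0 < x := hx.1
  have hsqrt : 0 < √t := sqrt_pos.2 ht.1
  let ρ := min x (√t / 2)
  have hρ : 0 < ρ := lt_min hx0 (by positivity)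
  have hρx : ρ ≤ x := min_le_left _ _
  have hρ1 : ρ ≤ 1 := by linarith [hx.2, min_le_right a 1]
  have hρt : ρ ^ 2 < t := by
    calc ρ ^ 2 ≤ (√t / 2) ^ 2 := by gcongr; exact min_le_right _ _
      _ = t / 4 := by rw [div_pow, sq_sqrt ht.1.le]; norm_num
      _ < t := by linarith [ht.1]
  have hgrad : ρ * x * |deriv (fun y => n y t) x| ≤ K := by
    refine (h.mul_abs_deriv_le hx hρ hρx hρt ht.2 (c := 0) (by positivity : 0 < M + 1)
      fun Y hY S hS => ?_).trans ?_
    · obtain ⟨hmem, -, -, hmem'⟩ :=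
        rescaled_mem_Ioo hx hρ hρt ht.2 (R := 1) (by linarith [hx.2, min_le_right a 1])
          (abs_le.2 hY) hS
      rw [sub_zero]
      linarith [h.abs_le_bound _ (Ioo_subset_Ioo_right (min_le_left a 1) hmem) _ hmem']
    · have : 2 * M * ρ ^ 2 ≤ 2 * M * 1 := by gcongr; exact pow_le_one₀ hρ.le hρ1
      simp only [K]
      linarith
  have hratio : x / ρ ≤ 2 * (1 + x * t ^ (-(1 / 2) : ℝ)) := by
    rw [rpow_neg ht.1.le, ← sqrt_eq_rpow, div_le_iff₀ hρ]
    have hcancel : (√t)⁻¹ * √t = 1 := inv_mul_cancel₀ hsqrt.ne'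
    rcases min_choice x (√t / 2) with hmin | hmin <;> simp only [ρ, hmin]
    · have : 0 ≤ x * (√t)⁻¹ * x := by positivity
      linarith
    · calc x ≤ √t + x * ((√t)⁻¹ * √t) := by rw [hcancel]; linarith
        _ = 2 * (1 + x * (√t)⁻¹) * (√t / 2) := by ring
  calc x ^ 2 * |deriv (fun y => n y t) x| = x / ρ * (ρ * x * |deriv (fun y => n y t) x|) := by
        field_simp
    _ ≤ 2 * (1 + x * t ^ (-(1 / 2) : ℝ)) * K :=
        mul_le_mul hratio hgrad (by positivity) ((by positivity : 0 ≤ x / ρ).trans hratio)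
    _ = 2 * K * (1 + x * t ^ (-(1 / 2) : ℝ)) := by ring

end IsBoundedKompSol

/-! ### Oscillation near the origin -/

/-- The oscillation of `n(·,τ)` on `(0,2x]`, measured from the value at `x`. As a supremum of reals
it is meaningful only where `n(·,τ)` is bounded. -/
noncomputable def osc (n : ℝ → ℝ → ℝ) (x τ : ℝ) : ℝ :=
  ⨆ z : Ioc (0 : ℝ) (2 * x), |n z τ - n x τ|

lemma osc_nonneg (n : ℝ → ℝ → ℝ) (x τ : ℝ) : 0 ≤ osc n x τ :=
  Real.iSup_nonneg fun _ => abs_nonneg _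

lemma tendsto_osc {n : ℝ → ℝ → ℝ} {τ l : ℝ} (hl : Tendsto (fun x => n x τ) (𝓝[>] 0) (𝓝 l)) :
    Tendsto (fun x => osc n x τ) (𝓝[>] 0) (𝓝 0) := by
  refine Metric.tendsto_nhds.2 fun ε hε => ?_
  obtain ⟨δ, hδ, hnear⟩ := mem_nhdsGT_iff_exists_Ioo_subset.1
    (Metric.tendsto_nhds.1 hl (ε / 3) (by positivity))
  filter_upwards [Ioo_mem_nhdsGT (half_pos hδ)] with x hx
  have hx' : dist (n x τ) l < ε / 3 := hnear ⟨hx.1, by linarith [hx.1, hx.2]⟩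
  have hosc : osc n x τ ≤ ε / 3 + ε / 3 := Real.iSup_le (fun z => by
    have hz : dist (n z τ) l < ε / 3 := hnear ⟨z.2.1, by linarith [z.2.2, hx.2]⟩
    exact (dist_triangle_right _ _ l).trans (add_le_add hz.le hx'.le)) (by positivity)
  rw [Real.dist_0_eq_abs, abs_of_nonneg (osc_nonneg n x τ)]
  linarith

namespace IsBoundedKompSol

variable {n : ℝ → ℝ → ℝ} {a T M x t τ : ℝ}

lemma abs_sub_le (h : IsBoundedKompSol n a T M) {y : ℝ} (hx : x ∈ Ioo 0 a) (hy : y ∈ Ioo 0 a)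
    (ht : t ∈ Ioo 0 T) (hτ : τ ∈ Ioo 0 T) : |n y τ - n x t| ≤ 2 * M :=
  (abs_sub _ _).trans (by linarith [h.abs_le_bound x hx t ht, h.abs_le_bound y hy τ hτ])

lemma abs_sub_le_two_mul (h : IsBoundedKompSol n a T M) (hx : 2 * x < a) (hτ : τ ∈ Ioo 0 T)
    (z : Ioc (0 : ℝ) (2 * x)) : |n z τ - n x τ| ≤ 2 * M := by
  have hz := z.2
  have hza : (z : ℝ) ∈ Ioo 0 a := ⟨hz.1, hz.2.trans_lt hx⟩
  have hxa : x ∈ Ioo 0 a := by constructor <;> linarith [hz.1, hz.2]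
  exact h.abs_sub_le hxa hza hτ hτ

lemma osc_le (h : IsBoundedKompSol n a T M) (hx : 2 * x < a) (hτ : τ ∈ Ioo 0 T) :
    osc n x τ ≤ 2 * M :=
  Real.iSup_le (h.abs_sub_le_two_mul hx hτ) (by linarith [h.bound_nonneg])

lemma abs_sub_le_osc (h : IsBoundedKompSol n a T M) (hx : 2 * x < a) (hτ : τ ∈ Ioo 0 T) {z : ℝ}
    (hz : z ∈ Ioc 0 (2 * x)) : |n z τ - n x τ| ≤ osc n x τ :=
  le_ciSup (f := fun z : Ioc (0 : ℝ) (2 * x) => |n z τ - n x τ|)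
    ⟨2 * M, forall_mem_range.2 (h.abs_sub_le_two_mul hx hτ)⟩ ⟨z, hz⟩

lemma exists_abs_sub_le_osc_add (h : IsBoundedKompSol n a T M) :
    ∃ D : ℝ, 0 < D ∧ ∀ x ∈ Ioo 0 (min a 1 / 2), ∀ t ∈ Ioo (x ^ 2) T, ∀ Y ∈ Icc (-1 : ℝ) 1,
      ∀ S ∈ Icc (-1 : ℝ) 0, |n (x * exp (x * Y)) (t + x ^ 2 * S) - n x (t - x ^ 2)| ≤
        osc n x (t - x ^ 2) + D * x := by
  have hM := h.bound_nonneg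
  refine ⟨2 * M + (12 + 16 * M) * (2 * M + 1), by positivity, fun x hx t ht Y hY S hS => ?_⟩
  obtain ⟨hx0, hxa⟩ := hx
  have hmina := min_le_left a 1
  have hmin1 := min_le_right a 1
  have hR : x * (1 / (2 * x)) ≤ 1 / 2 := by field_simp; rfl
  have hR1 : 1 ≤ 1 / (2 * x) := by rw [le_div_iff₀ (by positivity)]; linarith
  have hinit : t - x ^ 2 ∈ Ioo 0 T := ⟨by linarith [ht.1], by linarith [ht.2, sq_nonneg x]⟩
  have hxa' : x ∈ Ioo 0 a := ⟨hx0, by linarith⟩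
  have hmem {Y S : ℝ} (hY : Y ∈ Icc (-(1 / (2 * x))) (1 / (2 * x))) (hS : S ∈ Icc (-1 : ℝ) 0) :=
    rescaled_mem_Ioo ⟨hx0, hxa⟩ hx0 ht.1 ht.2 hR (abs_le.2 hY) hS
  obtain ⟨ux, uxx, ut, hu, -⟩ := h.exists_isParabolic_rescaled ⟨hx0, hxa⟩ hx0 le_rfl ht.1 ht.2 hR
    (n x (t - x ^ 2))
  have hspread := hu.abs_le_of_initial_abs_le hR1 (by positivity) (by positivity)
    (by positivity : 0 < 2 * M + 1) (osc_nonneg n x (t - x ^ 2)) (fun Y hY S hS => ?_)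
    (fun Y hY => ?_) hY hS
  · refine hspread.trans ?_
    have : M * (x * x) ≤ M * (1 * x) := by gcongr; linarith
    have hdiv : (2 * M + 1) / (1 / (2 * x)) = (2 * M + 1) * (2 * x) := by field_simp
    rw [hdiv]
    linarith
  · obtain ⟨hX, -, -, ht'⟩ := hmem hY hS
    exact (h.abs_sub_le hxa' ⟨hX.1, hX.2.trans_le hmina⟩ hinit ht').trans (by linarith)
  · obtain ⟨hX, -, hX2, -⟩ := hmem hY (S := -1) (by simp)
    simpa [← sub_eq_add_neg] using h.abs_sub_le_osc (by linarith) hinit ⟨hX.1, hX2⟩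

lemma exists_mul_abs_deriv_le_osc (h : IsBoundedKompSol n a T M) :
    ∃ C : ℝ, 0 ≤ C ∧ ∀ x ∈ Ioo 0 (min a 1 / 2), ∀ t ∈ Ioo (x ^ 2) T,
      x ^ 2 * |deriv (fun y => n y t) x| ≤ C * (osc n x (t - x ^ 2) + x) := by
  have hM := h.bound_nonneg
  obtain ⟨D, hD, hspread⟩ := h.exists_abs_sub_le_osc_add
  let K : ℝ := 4 * (2 + 4 * M)
  have : 0 ≤ K := by positivity
  refine ⟨K * (D + 1) + 2 * M, by positivity, fun x hx t ht => ?_⟩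
  have hx0 : 0 < x := hx.1
  have hosc := osc_nonneg n x (t - x ^ 2)
  have hx1 : x * x ≤ 1 * x := by gcongr; linarith [hx.2, min_le_right a 1]
  calc x ^ 2 * |deriv (fun y => n y t) x| = x * x * |deriv (fun y => n y t) x| := by ring
    _ ≤ K * (osc n x (t - x ^ 2) + D * x) + 2 * M * x ^ 2 :=
        h.mul_abs_deriv_le hx hx0 le_rfl ht.1 ht.2 (by positivity) (hspread x hx t ht)
    _ ≤ K * (osc n x (t - x ^ 2) + D * x) + 2 * M * x +
          (K * (D * osc n x (t - x ^ 2) + x) + 2 * M * osc n x (t - x ^ 2)) := by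
        have : 0 ≤ K * (D * osc n x (t - x ^ 2) + x) + 2 * M * osc n x (t - x ^ 2) := by
          positivity
        have : 2 * M * x ^ 2 ≤ 2 * M * x := by gcongr; linarith
        linarith
    _ = (K * (D + 1) + 2 * M) * (osc n x (t - x ^ 2) + x) := by ring

end IsBoundedKompSol

/-! ### Measurability and integrability in time -/

lemma aestronglyMeasurable_of_tendsto_of_eventually {α ι : Type*} [MeasurableSpace α]
    {μ : Measure α} {l : Filter ι} [NeBot l] [IsCountablyGenerated l] {f : ι → α → ℝ} {g : α → ℝ}
    (hf : ∀ᶠ i in l, AEStronglyMeasurable (f i) μ)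
    (hlim : ∀ᵐ x ∂μ, Tendsto (fun i => f i x) l (𝓝 (g x))) : AEStronglyMeasurable g μ := by
  obtain ⟨u, hu⟩ := l.exists_seq_tendsto
  obtain ⟨N, hN⟩ := eventually_atTop.1 (hu.eventually hf)
  refine aestronglyMeasurable_of_tendsto_ae atTop (f := fun k => f (u (k + N)))
    (fun k => hN _ (Nat.le_add_left N k)) ?_
  filter_upwards [hlim] with x hx using hx.comp (hu.comp (tendsto_add_atTop_nat N))

lemma intervalIntegrable_of_abs_le {f g : ℝ → ℝ} {A : Set ℝ} {s t : ℝ} (hA : MeasurableSet A)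
    (hst : uIoc s t ⊆ A) (hf : AEStronglyMeasurable f (volume.restrict A))
    (hg : IntervalIntegrable g volume s t) (hfg : ∀ τ ∈ A, |f τ| ≤ g τ) :
    IntervalIntegrable f volume s t :=
  hg.mono_fun' (hf.mono_set hst) <|
    ae_restrict_of_ae_restrict_of_subset hst (ae_restrict_of_forall_mem hA hfg)

lemma tendsto_intervalIntegral_zero_of_abs_le {ι : Type*} {l : Filter ι} [IsCountablyGenerated l]
    {f : ι → ℝ → ℝ} {s t C : ℝ}
    (hmeas : ∀ᶠ i in l, AEStronglyMeasurable (f i) (volume.restrict (uIoc s t)))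
    (hbound : ∀ᶠ i in l, ∀ τ ∈ uIoc s t, |f i τ| ≤ C)
    (hlim : ∀ τ ∈ uIoc s t, Tendsto (fun i => f i τ) l (𝓝 0)) :
    Tendsto (fun i => ∫ τ in s..t, f i τ) l (𝓝 0) := by
  simpa only [intervalIntegral.integral_zero] using
    intervalIntegral.tendsto_integral_filter_of_dominated_convergence (fun _ => C) hmeas
      (hbound.mono fun _ h => ae_of_all _ h) intervalIntegrable_const (ae_of_all _ hlim)

lemma uIoc_subset_Ioo {s t T : ℝ} (hs : 0 ≤ s) (hst : s ≤ t) (htT : t < T) :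
    uIoc s t ⊆ Ioo 0 T := by
  rw [uIoc_of_le hst]
  exact fun τ hτ => ⟨hs.trans_lt hτ.1, hτ.2.trans_lt htT⟩

lemma eventually_mem_Ioo_min_half {a : ℝ} (ha : 0 < a) :
    ∀ᶠ x : ℝ in 𝓝[>] 0, x ∈ Ioo 0 (min a 1 / 2) :=
  Ioo_mem_nhdsGT (half_pos (lt_min ha one_pos))

namespace IsBoundedKompSol

variable {n : ℝ → ℝ → ℝ} {b : ℝ → ℝ} {a T M x s t : ℝ}

lemma continuousOn_time (h : IsBoundedKompSol n a T M) (hx : x ∈ Ioo 0 a) :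
    ContinuousOn (n x) (Ioo 0 T) :=
  h.continuousOn.comp (f := fun τ : ℝ => (x, τ)) (by fun_prop) fun _ hτ => ⟨hx, hτ⟩

lemma aestronglyMeasurable (h : IsBoundedKompSol n a T M) (hx : x ∈ Ioo 0 a) :
    AEStronglyMeasurable (n x) (volume.restrict (Ioo 0 T)) :=
  (h.continuousOn_time hx).aestronglyMeasurable measurableSet_Ioo

lemma aestronglyMeasurable_deriv (h : IsBoundedKompSol n a T M) (hx : x ∈ Ioo 0 a) :
    AEStronglyMeasurable (fun τ => deriv (fun y => n y τ) x) (volume.restrict (Ioo 0 T)) := by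
  refine aestronglyMeasurable_of_tendsto_of_eventually (l := 𝓝[≠] x)
    (f := fun y τ => slope (fun y => n y τ) x y) ?_ ?_
  · filter_upwards [mem_nhdsWithin_of_mem_nhds (isOpen_Ioo.mem_nhds hx)] with y hy
    simp only [slope_def_field, div_eq_mul_inv]
    exact ((h.aestronglyMeasurable hy).sub (h.aestronglyMeasurable hx)).mul_const _
  · filter_upwards [ae_restrict_mem measurableSet_Ioo] with τ hτ
    exact hasDerivAt_iff_tendsto_slope.1 (h.diff_x x hx τ hτ).hasDerivAt

lemma aestronglyMeasurable_osc (h : IsBoundedKompSol n a T M) (hx : 0 < x) (hxa : 2 * x < a) :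
    AEStronglyMeasurable (osc n x) (volume.restrict (Ioo 0 T)) := by
  have hosc : LowerSemicontinuousOn (osc n x) (Ioo 0 T) := by
    refine lowerSemicontinuousOn_ciSup
      (fun τ hτ => ⟨2 * M, forall_mem_range.2 (h.abs_sub_le_two_mul hxa hτ)⟩) fun z => ?_
    exact ((h.continuousOn_time ⟨z.2.1, z.2.2.trans_lt hxa⟩).sub
      (h.continuousOn_time ⟨hx, by linarith⟩)).abs.lowerSemicontinuousOn
  exact (aemeasurable_restrict_of_measurable_subtype measurableSet_Ioo
    (lowerSemicontinuous_restrict_iff.2 hosc).measurable).aestronglyMeasurable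

lemma intervalIntegrable_mul_abs_deriv (h : IsBoundedKompSol n a T M)
    (hx : x ∈ Ioo 0 (min a 1 / 2)) (hst : uIoc s t ⊆ Ioo 0 T) :
    IntervalIntegrable (fun τ => x ^ 2 * |deriv (fun y => n y τ) x|) volume s t := by
  obtain ⟨C, -, hC⟩ := h.exists_mul_abs_deriv_le
  have hxa : x ∈ Ioo 0 a := ⟨hx.1, by linarith [hx.1, hx.2, min_le_left a 1]⟩
  refine intervalIntegrable_of_abs_le measurableSet_Ioo hst
    ((h.aestronglyMeasurable_deriv hxa).norm.const_mul (x ^ 2))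
    (((intervalIntegrable_const (c := (1 : ℝ))).add
      ((intervalIntegral.intervalIntegrable_rpow' (r := -(1 / 2)) (by norm_num)).const_mul
        x)).const_mul C)
    fun τ hτ => ?_
  rw [abs_of_nonneg (by positivity)]
  exact hC x hx τ hτ

lemma intervalIntegrable_osc (h : IsBoundedKompSol n a T M) (hx : 0 < x) (hxa : 2 * x < a)
    (hst : uIoc s t ⊆ Ioo 0 T) : IntervalIntegrable (osc n x) volume s t := by
  refine intervalIntegrable_of_abs_le measurableSet_Ioo hst (h.aestronglyMeasurable_osc hx hxa)
    (intervalIntegrable_const (c := 2 * M)) fun τ hτ => ?_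
  rw [abs_of_nonneg (osc_nonneg n x τ)]
  exact h.osc_le hxa hτ

/-! ### The diffusive part of the flux -/

lemma tendsto_integral_osc (h : IsBoundedKompSol n a T M) (ha : 0 < a)
    (hb : ∀ t ∈ Ioo 0 T, Tendsto (fun x => n x t) (𝓝[>] 0) (𝓝 (b t)))
    (hst : uIoc s t ⊆ Ioo 0 T) :
    Tendsto (fun x => ∫ τ in s..t, osc n x τ) (𝓝[>] 0) (𝓝 0) := by
  refine tendsto_intervalIntegral_zero_of_abs_le (C := 2 * M) ?_ ?_
    fun τ hτ => tendsto_osc (hb τ (hst hτ))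
  all_goals
    filter_upwards [eventually_mem_Ioo_min_half ha] with x hx
    have hxa : 2 * x < a := by linarith [hx.2, min_le_left a 1]
  · exact (h.aestronglyMeasurable_osc hx.1 hxa).mono_set hst
  · intro τ hτ
    rw [abs_of_nonneg (osc_nonneg n x τ)]
    exact h.osc_le hxa (hst hτ)

lemma integral_rpow_neg_half (r : ℝ) : ∫ τ in 0..r, τ ^ (-(1 / 2) : ℝ) = 2 * r ^ (1 / 2 : ℝ) := by
  have hexp : -(1 / 2) + 1 = (1 / 2 : ℝ) := by norm_num
  rw [integral_rpow (Or.inl (by norm_num)), hexp, zero_rpow (by norm_num), sub_zero]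
  ring

lemma exists_integral_initial_layer_le (h : IsBoundedKompSol n a T M) :
    ∃ C : ℝ, ∀ x ∈ Ioo 0 (min a 1 / 2), x ^ 2 < T →
      ∫ τ in 0..x ^ 2, x ^ 2 * |deriv (fun y => n y τ) x| ≤ C * x ^ 2 := by
  obtain ⟨C, -, hC⟩ := h.exists_mul_abs_deriv_le
  refine ⟨C * 3, fun x hx hxT => ?_⟩
  have hconst : IntervalIntegrable (fun _ : ℝ => (1 : ℝ)) volume 0 (x ^ 2) :=
    intervalIntegrable_const
  have hrpow : IntervalIntegrable (fun τ : ℝ => x * τ ^ (-(1 / 2) : ℝ)) volume 0 (x ^ 2) :=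
    (intervalIntegral.intervalIntegrable_rpow' (by norm_num)).const_mul x
  calc ∫ τ in 0..x ^ 2, x ^ 2 * |deriv (fun y => n y τ) x|
      ≤ ∫ τ in 0..x ^ 2, C * (1 + x * τ ^ (-(1 / 2) : ℝ)) :=
        intervalIntegral.integral_mono_on_of_le_Ioo (sq_nonneg x)
          (h.intervalIntegrable_mul_abs_deriv hx (uIoc_subset_Ioo le_rfl (sq_nonneg x) hxT))
          ((hconst.add hrpow).const_mul C) fun τ hτ => hC x hx τ ⟨hτ.1, hτ.2.trans hxT⟩
    _ = C * (x ^ 2 + x * (2 * √(x ^ 2))) := by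
        rw [intervalIntegral.integral_const_mul, intervalIntegral.integral_add hconst hrpow,
          intervalIntegral.integral_const_mul, integral_rpow_neg_half, sqrt_eq_rpow,
          intervalIntegral.integral_const, sub_zero, smul_eq_mul, mul_one]
    _ = C * 3 * x ^ 2 := by rw [sqrt_sq hx.1.le]; ring

lemma exists_integral_le_integral_osc (h : IsBoundedKompSol n a T M) :
    ∃ C : ℝ, ∀ x ∈ Ioo 0 (min a 1 / 2), ∀ t ∈ Ioo (x ^ 2) T,
      ∫ τ in (x ^ 2)..t, x ^ 2 * |deriv (fun y => n y τ) x| ≤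
        C * ((∫ τ in 0..t, osc n x τ) + t * x) := by
  obtain ⟨C, hC0, hC⟩ := h.exists_mul_abs_deriv_le_osc
  refine ⟨C, fun x hx t ⟨hxt, htT⟩ => ?_⟩
  have hx2 := sq_nonneg x
  have hxa : 2 * x < a := by linarith [hx.2, min_le_left a 1]
  have hosc {r : ℝ} (hr0 : 0 ≤ r) (hrt : r ≤ t) : IntervalIntegrable (osc n x) volume 0 r :=
    h.intervalIntegrable_osc hx.1 hxa (uIoc_subset_Ioo le_rfl hr0 (hrt.trans_lt htT))
  have hshift : IntervalIntegrable (fun τ => osc n x (τ - x ^ 2)) volume (x ^ 2) t := by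
    have := (hosc (sub_nonneg.2 hxt.le) (sub_le_self t hx2)).comp_sub_right (x ^ 2)
    rwa [zero_add, sub_add_cancel] at this
  calc ∫ τ in (x ^ 2)..t, x ^ 2 * |deriv (fun y => n y τ) x|
      ≤ ∫ τ in (x ^ 2)..t, C * (osc n x (τ - x ^ 2) + x) :=
        intervalIntegral.integral_mono_on_of_le_Ioo hxt.le
          (h.intervalIntegrable_mul_abs_deriv hx (uIoc_subset_Ioo hx2 hxt.le htT))
          ((hshift.add intervalIntegrable_const).const_mul C)
          fun τ hτ => hC x hx τ ⟨hτ.1, hτ.2.trans htT⟩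
    _ = C * ((∫ τ in 0..t - x ^ 2, osc n x τ) + (t - x ^ 2) * x) := by
        rw [intervalIntegral.integral_const_mul,
          intervalIntegral.integral_add hshift intervalIntegrable_const,
          intervalIntegral.integral_comp_sub_right (osc n x), sub_self,
          intervalIntegral.integral_const, smul_eq_mul]
    _ ≤ C * ((∫ τ in 0..t, osc n x τ) + t * x) := by
        have hx0 := hx.1.le
        gcongr
        · exact intervalIntegral.integral_mono_interval le_rfl (sub_nonneg.2 hxt.le) (by linarith)
            (ae_of_all _ (osc_nonneg n x)) (hosc (hx2.trans hxt.le) le_rfl)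
        · linarith

lemma tendsto_integral_mul_abs_deriv_zero (h : IsBoundedKompSol n a T M) (ha : 0 < a)
    (hb : ∀ t ∈ Ioo 0 T, Tendsto (fun x => n x t) (𝓝[>] 0) (𝓝 (b t)))
    (ht : 0 < t) (htT : t < T) :
    Tendsto (fun x => ∫ τ in 0..t, x ^ 2 * |deriv (fun y => n y τ) x|) (𝓝[>] 0) (𝓝 0) := by
  obtain ⟨C₁, hlayer⟩ := h.exists_integral_initial_layer_le
  obtain ⟨C₂, hmain⟩ := h.exists_integral_le_integral_osc
  have hid : Tendsto (fun x : ℝ => x) (𝓝[>] 0) (𝓝 0) := nhdsWithin_le_nhds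
  have hsq : Tendsto (fun x : ℝ => x ^ 2) (𝓝[>] 0) (𝓝 0) := by simpa using hid.pow 2
  have hosc := h.tendsto_integral_osc ha hb (uIoc_subset_Ioo le_rfl ht.le htT)
  have hupper : Tendsto (fun x => C₁ * x ^ 2 + C₂ * ((∫ τ in 0..t, osc n x τ) + t * x))
      (𝓝[>] 0) (𝓝 0) := by
    simpa using (hsq.const_mul C₁).add ((hosc.add (hid.const_mul t)).const_mul C₂)
  refine squeeze_zero' (Eventually.of_forall fun x =>
    intervalIntegral.integral_nonneg ht.le fun τ _ => by positivity) ?_ hupper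
  filter_upwards [eventually_mem_Ioo_min_half ha, hsq.eventually_lt_const ht] with x hx hxt
  rw [← intervalIntegral.integral_add_adjacent_intervals
    (h.intervalIntegrable_mul_abs_deriv hx
      (uIoc_subset_Ioo le_rfl (sq_nonneg x) (hxt.trans htT)))
    (h.intervalIntegrable_mul_abs_deriv hx (uIoc_subset_Ioo (sq_nonneg x) hxt.le htT))]
  exact add_le_add (hlayer x hx (hxt.trans htT)) (hmain x hx t ⟨hxt, htT⟩)

lemma tendsto_integral_mul_abs_deriv (h : IsBoundedKompSol n a T M) (ha : 0 < a)
    (hb : ∀ t ∈ Ioo 0 T, Tendsto (fun x => n x t) (𝓝[>] 0) (𝓝 (b t)))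
    (hs : 0 ≤ s) (hst : s ≤ t) (htT : t < T) :
    Tendsto (fun x => ∫ τ in s..t, x ^ 2 * |deriv (fun y => n y τ) x|) (𝓝[>] 0) (𝓝 0) := by
  rcases (hs.trans hst).eq_or_lt with rfl | ht
  · simp [le_antisymm hst hs]
  refine squeeze_zero' (Eventually.of_forall fun x =>
    intervalIntegral.integral_nonneg hst fun τ _ => by positivity) ?_
    (h.tendsto_integral_mul_abs_deriv_zero ha hb ht htT)
  filter_upwards [eventually_mem_Ioo_min_half ha] with x hx
  exact intervalIntegral.integral_mono_interval hs hst le_rfl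
    (ae_of_all _ fun τ => by positivity)
    (h.intervalIntegrable_mul_abs_deriv hx (uIoc_subset_Ioo le_rfl ht.le htT))

end IsBoundedKompSol

/-! ### The total flux -/

lemma abs_kompFlux_sub_sq_le {u : ℝ → ℝ} {x β M : ℝ} (hx : x ∈ Icc 0 2) (hu : |u x| ≤ M) :
    |kompFlux u x - β ^ 2| ≤ x ^ 2 * |deriv u x| + 2 * x * M + |u x ^ 2 - β ^ 2| := by
  have hdrift : |x ^ 2 - 2 * x| ≤ 2 * x := abs_le.2 ⟨by nlinarith, by nlinarith [hx.1, hx.2]⟩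
  calc |kompFlux u x - β ^ 2|
      = |x ^ 2 * deriv u x + (x ^ 2 - 2 * x) * u x + (u x ^ 2 - β ^ 2)| := by
        rw [kompFlux, add_sub_assoc]
    _ ≤ |x ^ 2 * deriv u x| + |(x ^ 2 - 2 * x) * u x| + |u x ^ 2 - β ^ 2| := abs_add_three _ _ _
    _ ≤ x ^ 2 * |deriv u x| + 2 * x * M + |u x ^ 2 - β ^ 2| := by
        rw [abs_mul, abs_mul, abs_of_nonneg (sq_nonneg x)]
        have := hx.1
        gcongr

namespace IsBoundedKompSol

variable {n : ℝ → ℝ → ℝ} {b : ℝ → ℝ} {a T M x s t τ : ℝ}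

lemma abs_sq_le (h : IsBoundedKompSol n a T M) (hx : x ∈ Ioo 0 a) (hτ : τ ∈ Ioo 0 T) :
    |n x τ ^ 2| ≤ M ^ 2 := by
  rw [abs_pow]
  exact pow_le_pow_left₀ (abs_nonneg _) (h.abs_le_bound x hx τ hτ) 2

lemma abs_limit_sq_le (h : IsBoundedKompSol n a T M) (ha : 0 < a)
    (hb : Tendsto (fun x => n x τ) (𝓝[>] 0) (𝓝 (b τ))) (hτ : τ ∈ Ioo 0 T) :
    |b τ ^ 2| ≤ M ^ 2 := by
  refine le_of_tendsto (hb.pow 2).abs ?_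
  filter_upwards [Ioo_mem_nhdsGT ha] with x hx using h.abs_sq_le hx hτ

lemma aestronglyMeasurable_limit (h : IsBoundedKompSol n a T M) (ha : 0 < a)
    (hb : ∀ t ∈ Ioo 0 T, Tendsto (fun x => n x t) (𝓝[>] 0) (𝓝 (b t))) :
    AEStronglyMeasurable b (volume.restrict (Ioo 0 T)) := by
  refine aestronglyMeasurable_of_tendsto_of_eventually (l := 𝓝[>] 0) (f := n) ?_
    (ae_restrict_of_forall_mem measurableSet_Ioo hb)
  filter_upwards [Ioo_mem_nhdsGT ha] with x hx using h.aestronglyMeasurable hx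

lemma intervalIntegrable_sq (h : IsBoundedKompSol n a T M) (hx : x ∈ Ioo 0 a)
    (hst : uIoc s t ⊆ Ioo 0 T) : IntervalIntegrable (fun τ => n x τ ^ 2) volume s t :=
  intervalIntegrable_of_abs_le measurableSet_Ioo hst ((h.aestronglyMeasurable hx).pow 2)
    intervalIntegrable_const fun _ => h.abs_sq_le hx

lemma intervalIntegrable_limit_sq (h : IsBoundedKompSol n a T M) (ha : 0 < a)
    (hb : ∀ t ∈ Ioo 0 T, Tendsto (fun x => n x t) (𝓝[>] 0) (𝓝 (b t)))
    (hst : uIoc s t ⊆ Ioo 0 T) : IntervalIntegrable (fun τ => b τ ^ 2) volume s t :=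
  intervalIntegrable_of_abs_le measurableSet_Ioo hst ((h.aestronglyMeasurable_limit ha hb).pow 2)
    intervalIntegrable_const fun τ hτ => h.abs_limit_sq_le ha (hb τ hτ) hτ

lemma intervalIntegrable_kompFlux (h : IsBoundedKompSol n a T M)
    (hx : x ∈ Ioo 0 (min a 1 / 2)) (hst : uIoc s t ⊆ Ioo 0 T) :
    IntervalIntegrable (fun τ => kompFlux (fun z => n z τ) x) volume s t := by
  have hxa : x ∈ Ioo 0 a := ⟨hx.1, by linarith [hx.1, hx.2, min_le_left a 1]⟩
  have hderiv : IntervalIntegrable (fun τ => x ^ 2 * deriv (fun y => n y τ) x) volume s t := by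
    refine (h.intervalIntegrable_mul_abs_deriv hx hst).mono_fun
      (((h.aestronglyMeasurable_deriv hxa).mono_set hst).const_mul (x ^ 2))
      (ae_of_all _ fun τ => ?_)
    simp only [norm_mul, Real.norm_eq_abs, abs_abs, le_refl]
  have hn : IntervalIntegrable (n x) volume s t :=
    intervalIntegrable_of_abs_le measurableSet_Ioo hst (h.aestronglyMeasurable hxa)
      intervalIntegrable_const (h.abs_le_bound x hxa)
  exact (hderiv.add (hn.const_mul (x ^ 2 - 2 * x))).add (h.intervalIntegrable_sq hxa hst)

lemma tendsto_integral_abs_sq_sub_sq (h : IsBoundedKompSol n a T M) (ha : 0 < a)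
    (hb : ∀ t ∈ Ioo 0 T, Tendsto (fun x => n x t) (𝓝[>] 0) (𝓝 (b t)))
    (hst : uIoc s t ⊆ Ioo 0 T) :
    Tendsto (fun x => ∫ τ in s..t, |n x τ ^ 2 - b τ ^ 2|) (𝓝[>] 0) (𝓝 0) := by
  refine tendsto_intervalIntegral_zero_of_abs_le (C := M ^ 2 + M ^ 2) ?_ ?_ fun τ hτ => ?_
  · filter_upwards [Ioo_mem_nhdsGT ha] with x hx
    exact (((h.aestronglyMeasurable hx).pow 2).sub
      ((h.aestronglyMeasurable_limit ha hb).pow 2)).norm.mono_set hst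
  · filter_upwards [Ioo_mem_nhdsGT ha] with x hx τ hτ
    rw [abs_abs]
    exact (abs_sub _ _).trans (add_le_add (h.abs_sq_le hx (hst hτ))
      (h.abs_limit_sq_le ha (hb τ (hst hτ)) (hst hτ)))
  · have := (((hb τ (hst hτ)).pow 2).sub_const (b τ ^ 2)).abs
    rwa [sub_self, abs_zero] at this

lemma tendsto_integral_abs_kompFlux_sub (h : IsBoundedKompSol n a T M) (ha : 0 < a)
    (hb : ∀ t ∈ Ioo 0 T, Tendsto (fun x => n x t) (𝓝[>] 0) (𝓝 (b t)))
    (hs : 0 ≤ s) (hst : s ≤ t) (htT : t < T) :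
    Tendsto (fun x => ∫ τ in s..t, |kompFlux (fun z => n z τ) x - b τ ^ 2|)
      (𝓝[>] 0) (𝓝 0) := by
  have hsub := uIoc_subset_Ioo hs hst htT
  have hid : Tendsto (fun x : ℝ => x) (𝓝[>] 0) (𝓝 0) := nhdsWithin_le_nhds
  have hupper : Tendsto (fun x => (∫ τ in s..t, x ^ 2 * |deriv (fun y => n y τ) x|)
      + (t - s) * (2 * x * M) + ∫ τ in s..t, |n x τ ^ 2 - b τ ^ 2|) (𝓝[>] 0) (𝓝 0) := by
    simpa using ((h.tendsto_integral_mul_abs_deriv ha hb hs hst htT).add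
      (((hid.const_mul 2).mul_const M).const_mul (t - s))).add
      (h.tendsto_integral_abs_sq_sub_sq ha hb hsub)
  refine squeeze_zero' (Eventually.of_forall fun x =>
    intervalIntegral.integral_nonneg hst fun τ _ => abs_nonneg _) ?_ hupper
  filter_upwards [eventually_mem_Ioo_min_half ha] with x hx
  have hxa : x ∈ Ioo 0 a := ⟨hx.1, by linarith [hx.1, hx.2, min_le_left a 1]⟩
  have hderiv := h.intervalIntegrable_mul_abs_deriv hx hsub
  have hconst : IntervalIntegrable (fun _ : ℝ => 2 * x * M) volume s t := intervalIntegrable_const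
  have hlimit := h.intervalIntegrable_limit_sq ha hb hsub
  have hsquare := ((h.intervalIntegrable_sq hxa hsub).sub hlimit).abs
  calc ∫ τ in s..t, |kompFlux (fun z => n z τ) x - b τ ^ 2|
      ≤ ∫ τ in s..t, (x ^ 2 * |deriv (fun y => n y τ) x| + 2 * x * M + |n x τ ^ 2 - b τ ^ 2|) :=
        intervalIntegral.integral_mono_on_of_le_Ioo hst
          ((h.intervalIntegrable_kompFlux hx hsub).sub hlimit).abs
          ((hderiv.add hconst).add hsquare) fun τ hτ =>
            abs_kompFlux_sub_sq_le ⟨hx.1.le, by linarith [hx.2, min_le_right a 1]⟩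
              (h.abs_le_bound x hxa τ ⟨hs.trans_lt hτ.1, hτ.2.trans htT⟩)
    _ = _ := by
        rw [intervalIntegral.integral_add (hderiv.add hconst) hsquare,
          intervalIntegral.integral_add hderiv hconst, intervalIntegral.integral_const, smul_eq_mul]

lemma tendsto_integral_kompFlux (h : IsBoundedKompSol n a T M) (ha : 0 < a)
    (hb : ∀ t ∈ Ioo 0 T, Tendsto (fun x => n x t) (𝓝[>] 0) (𝓝 (b t)))
    (hs : 0 ≤ s) (hst : s ≤ t) (htT : t < T) :
    Tendsto (fun x => ∫ τ in s..t, kompFlux (fun z => n z τ) x)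
      (𝓝[>] 0) (𝓝 (∫ τ in s..t, b τ ^ 2)) := by
  have hsub := uIoc_subset_Ioo hs hst htT
  refine tendsto_iff_norm_sub_tendsto_zero.2 (squeeze_zero'
    (Eventually.of_forall fun _ => norm_nonneg _) ?_
    (h.tendsto_integral_abs_kompFlux_sub ha hb hs hst htT))
  filter_upwards [eventually_mem_Ioo_min_half ha] with x hx
  rw [← intervalIntegral.integral_sub (h.intervalIntegrable_kompFlux hx hsub)
    (h.intervalIntegrable_limit_sq ha hb hsub)]
  exact intervalIntegral.norm_integral_le_integral_norm hst

end IsBoundedKompSol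

theorem flux_behavior_at_zero_general {n : ℝ → ℝ → ℝ} {b : ℝ → ℝ} {a T M s t : ℝ}
    (h : IsBoundedKompSol n a T M) (ha : 0 < a)
    (hb : ∀ t ∈ Ioo 0 T, Tendsto (fun x => n x t) (𝓝[>] 0) (𝓝 (b t)))
    (hs : 0 ≤ s) (hst : s ≤ t) (htT : t < T) :
    Tendsto (fun x => ∫ τ in s..t, kompFlux (fun z => n z τ) x)
        (𝓝[>] 0) (𝓝 (∫ τ in s..t, b τ ^ 2)) ∧
      Tendsto (fun x => ∫ τ in s..t, x ^ 2 * |deriv (fun y => n y τ) x|) (𝓝[>] 0) (𝓝 0) ∧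
      Tendsto (fun x => ∫ τ in s..t, |kompFlux (fun z => n z τ) x - b τ ^ 2|)
        (𝓝[>] 0) (𝓝 0) :=
  ⟨h.tendsto_integral_kompFlux ha hb hs hst htT,
    h.tendsto_integral_mul_abs_deriv ha hb hs hst htT,
    h.tendsto_integral_abs_kompFlux_sub ha hb hs hst htT⟩

theorem flux_behavior_at_zero
    (n : ℝ → ℝ → ℝ) (n₀ : ℝ → ℝ)
    (hsol : IsKompSol n n₀)
    (h0nonneg : ∀ x : ℝ, 0 < x → 0 ≤ n₀ x)
    (h0bdd : ∃ C : ℝ, ∀ x : ℝ, 0 < x → n₀ x ≤ C)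
    (h0decay : Filter.Tendsto (fun x => x ^ 2 * n₀ x) Filter.atTop (nhds 0))
    (b : ℝ → ℝ)
    (hb : ∀ t : ℝ, 0 < t →
      Filter.Tendsto (fun x => n x t) (𝓝[>] (0:ℝ)) (nhds (b t)))
    :
    (∀ s t : ℝ, 0 ≤ s → s ≤ t →
      Filter.Tendsto (fun x => ∫ τ in s..t, kompFlux (fun z => n z τ) x)
        (𝓝[>] (0:ℝ)) (nhds (∫ τ in s..t, b τ ^ 2))) ∧
    (∀ s t : ℝ, 0 < s → s ≤ t →
      Filter.Tendsto (fun x => ∫ τ in s..t, x ^ 2 * |deriv (fun y => n y τ) x|)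
        (𝓝[>] (0:ℝ)) (nhds 0) ∧
      Filter.Tendsto (fun x => ∫ τ in s..t, |kompFlux (fun z => n z τ) x - b τ ^ 2|)
        (𝓝[>] (0:ℝ)) (nhds 0)) := by
  obtain ⟨M, hM⟩ := hsol.exists_isBoundedKompSol
  have hflux {s t : ℝ} (hs : 0 ≤ s) (hst : s ≤ t) :=
    flux_behavior_at_zero_general (hM 1 (t + 1)) one_pos (fun τ hτ => hb τ hτ.1) hs hst
      (lt_add_one t)
  exact ⟨fun s t hs hst => (hflux hs hst).1, fun s t hs hst => (hflux hs.le hst).2⟩
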